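/- arXiv:1203.1393 — 3 statements merged into one kernel-verified Lean document; each statement's English description precedes it below -/
import Mathlib

section
/- If the Riemann zeta function has a zero ξ with 1/2 < Re(ξ) < 1, then there exist a compact set K contained in D := {s ∈ ℂ : 1/2 < Re(s) < 1} with connected complement in ℂ and an ε > 0 such that liminf_{T→∞} (1/T)·μ{τ ∈ [0,T] : sup_{s∈K} |log ζ(s+iτ) − log ζ(s)| < ε} = 0. -/
open MeasureTheory Filter Complex
open scoped ENNReal

/-- The open strip `D = {s : 1/2 < Re s < 1}`. -/
def strip : Set ℂ := {s : ℂ | 1/2 < s.re ∧ s.re < 1}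

/-- Lower density of a set of real numbers:
`liminf_{T→∞} (1/T)·μ(S ∩ [0,T])`. -/
noncomputable def lowerDens (S : Set ℝ) : ℝ :=
  liminf (fun T : ℝ => (volume (S ∩ Set.Icc 0 T)).toReal / T) atTop

/-- `sup_{s ∈ K} |f s|`, valued in `ℝ≥0∞`. -/
noncomputable def supNorm (K : Set ℂ) (f : ℂ → ℂ) : ℝ≥0∞ :=
  ⨆ s ∈ K, (‖f s‖₊ : ℝ≥0∞)

open Metric Set Topology

/-! The modulus of `log ζ(s + iτ) - log ζ(s)` is at least `log |ζ(s + iτ)| - log |ζ(s)|`. As `s → ξ`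
the second term tends to `+∞`, so the difference can stay bounded on a punctured disc around `ξ`
only if `ζ(ξ + iτ) = 0` as well. Since the zeros of `ζ` are isolated, this happens for countably
many `τ` only, whatever the size of the disc and of `ε`. -/

theorem isOpen_strip : IsOpen strip :=
  (isOpen_lt continuous_const continuous_re).inter (isOpen_lt continuous_re continuous_const)

theorem lowerDens_eq_zero_of_volume_eq_zero {S : Set ℝ} (hS : volume S = 0) : lowerDens S = 0 := by
  have hST (T : ℝ) : volume (S ∩ Icc 0 T) = 0 := measure_inter_null_of_null_left _ hS
  simp only [lowerDens, hST, ENNReal.toReal_zero, zero_div, liminf_const]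

theorem nnnorm_le_supNorm {K : Set ℂ} (f : ℂ → ℂ) {s : ℂ} (hs : s ∈ K) :
    (‖f s‖₊ : ℝ≥0∞) ≤ supNorm K f :=
  le_iSup₂ (f := fun s (_ : s ∈ K) ↦ (‖f s‖₊ : ℝ≥0∞)) s hs

theorem norm_le_toReal_supNorm {K : Set ℂ} {f : ℂ → ℂ} (hf : supNorm K f < ∞) {s : ℂ}
    (hs : s ∈ K) : ‖f s‖ ≤ (supNorm K f).toReal := by
  simpa using ENNReal.toReal_mono hf.ne (nnnorm_le_supNorm f hs)

section NormedSpace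

variable {E : Type*} [NormedAddCommGroup E] [NormedSpace ℝ E]

theorem image_add_smul_Ioi_prod_sphere (x : E) {r : ℝ} (hr : 0 ≤ r) :
    (fun p : ℝ × E ↦ x + p.1 • p.2) '' (Ioi r ×ˢ sphere 0 1) = (closedBall x r)ᶜ := by
  ext y
  simp only [mem_image, mem_prod, mem_Ioi, mem_sphere_zero_iff_norm, Prod.exists, mem_compl_iff,
    mem_closedBall_iff_norm, not_le]
  constructor
  · rintro ⟨t, v, ⟨ht, hv⟩, rfl⟩
    rwa [add_sub_cancel_left, norm_smul, hv, mul_one, Real.norm_of_nonneg (hr.trans ht.le)]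
  · intro hy
    have hne : ‖y - x‖ ≠ 0 := (hr.trans_lt hy).ne'
    refine ⟨‖y - x‖, ‖y - x‖⁻¹ • (y - x), ⟨hy, ?_⟩, ?_⟩
    · rw [norm_smul, norm_inv, norm_norm, inv_mul_cancel₀ hne]
    · rw [smul_inv_smul₀ hne, add_sub_cancel]

theorem isConnected_compl_closedBall (hE : 1 < Module.rank ℝ E) (x : E) {r : ℝ} (hr : 0 ≤ r) :
    IsConnected (closedBall x r)ᶜ := by
  rw [← image_add_smul_Ioi_prod_sphere x hr]
  exact (isConnected_Ioi.prod (isConnected_sphere hE 0 zero_le_one)).image _ (by fun_prop)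

end NormedSpace

theorem norm_le_exp_norm_log_sub_log_mul_norm {z : ℂ} (hz : z ≠ 0) (w : ℂ) :
    ‖w‖ ≤ Real.exp ‖log w - log z‖ * ‖z‖ :=
  calc ‖w‖ ≤ Real.exp (Real.log ‖w‖) := Real.le_exp_log _
    _ = Real.exp ((log w - log z).re + Real.log ‖z‖) := by
      rw [sub_re, log_re, log_re, sub_add_cancel]
    _ ≤ Real.exp (‖log w - log z‖ + Real.log ‖z‖) := by gcongr; exact re_le_norm _
    _ = Real.exp ‖log w - log z‖ * ‖z‖ := by
      rw [Real.exp_add, Real.exp_log (norm_pos_iff.2 hz)]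

theorem tendsto_zero_of_norm_log_sub_log_le {α : Type*} {l : Filter α} {f g : α → ℂ} {C : ℝ}
    (hf : Tendsto f l (𝓝[≠] 0)) (hC : ∀ᶠ x in l, ‖log (g x) - log (f x)‖ ≤ C) :
    Tendsto g l (𝓝 0) := by
  obtain ⟨hf₀, hf_ne⟩ := tendsto_nhdsWithin_iff.1 hf
  refine squeeze_zero_norm' (a := fun x ↦ Real.exp C * ‖f x‖) ?_ ?_
  · filter_upwards [hf_ne, hC] with x hx hxC
    exact (norm_le_exp_norm_log_sub_log_mul_norm hx _).trans (by gcongr)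
  · simpa only [norm_zero, mul_zero] using hf₀.norm.const_mul (Real.exp C)

/-- An accumulation point is needed here: if `f z = 0`, then `log (f z)` is the junk value
`log 0 = 0`, so only the points of `K` other than `z` carry information. -/
theorem eq_zero_of_supNorm_log_sub_log_lt_top {f g : ℂ → ℂ} {K : Set ℂ} {z : ℂ}
    (hK : AccPt z (𝓟 K)) (hf : Tendsto f (𝓝[≠] z) (𝓝[≠] 0)) (hg : ContinuousAt g z)
    (hfg : supNorm K (fun s ↦ log (g s) - log (f s)) < ∞) : g z = 0 := by
  have : (𝓝[≠] z ⊓ 𝓟 K).NeBot := hK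
  have hbound : ∀ᶠ s in 𝓝[≠] z ⊓ 𝓟 K, ‖log (g s) - log (f s)‖ ≤
      (supNorm K fun s ↦ log (g s) - log (f s)).toReal :=
    eventually_inf_principal.2 (.of_forall fun _ hs ↦ norm_le_toReal_supNorm hfg hs)
  exact tendsto_nhds_unique (hg.tendsto.mono_left (inf_le_left.trans nhdsWithin_le_nhds))
    (tendsto_zero_of_norm_log_sub_log_le (hf.mono_left inf_le_left) hbound)

section RiemannZeta

theorem countable_riemannZetaZeros : riemannZetaZeros.Countable :=
  have := isDiscrete_riemannZetaZeros.to_subtype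
  countable_coe_iff.1 (TopologicalSpace.separableSpace_iff_countable.1 inferInstance)

theorem tendsto_riemannZeta_nhdsNE_zero {ξ : ℂ} (hξ : riemannZeta ξ = 0) :
    Tendsto riemannZeta (𝓝[≠] ξ) (𝓝[≠] 0) := by
  have hξ₁ : ξ ≠ 1 := by rintro rfl; exact riemannZeta_one_ne_zero hξ
  have hcont := (differentiableAt_riemannZeta hξ₁).continuousAt.tendsto
  rw [hξ] at hcont
  refine tendsto_nhdsWithin_iff.2 ⟨hcont.mono_left nhdsWithin_le_nhds, ?_⟩
  have hdisj : Disjoint (𝓝[≠] ξ) (𝓟 riemannZetaZeros) :=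
    disjoint_iff.2 (isDiscrete_iff_nhdsNE.1 isDiscrete_riemannZetaZeros ξ hξ)
  exact disjoint_principal_right.1 hdisj

variable {ξ : ℂ} {K : Set ℂ}

theorem riemannZeta_add_eq_zero_of_supNorm_lt_top (hξ : riemannZeta ξ = 0) (hK : AccPt ξ (𝓟 K))
    {a : ℂ} (ha : ξ + a ≠ 1)
    (hlog : supNorm K (fun s ↦ log (riemannZeta (s + a)) - log (riemannZeta s)) < ∞) :
    riemannZeta (ξ + a) = 0 :=
  eq_zero_of_supNorm_log_sub_log_lt_top (g := fun s ↦ riemannZeta (s + a)) hK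
    (tendsto_riemannZeta_nhdsNE_zero hξ)
    ((differentiableAt_riemannZeta ha).continuousAt.comp (f := (· + a)) (by fun_prop)) hlog

theorem countable_setOf_supNorm_log_riemannZeta_lt_top (hξ : riemannZeta ξ = 0)
    (hK : AccPt ξ (𝓟 K)) :
    {τ : ℝ | supNorm K (fun s ↦ log (riemannZeta (s + τ * I)) - log (riemannZeta s)) <
      ∞}.Countable := by
  have hinj : Function.Injective fun τ : ℝ ↦ ξ + τ * I := fun a b hab ↦ by simpa using hab
  refine ((countable_riemannZetaZeros.insert 1).preimage hinj).mono fun τ hτ ↦ ?_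
  exact or_iff_not_imp_left.2 fun hne ↦ riemannZeta_add_eq_zero_of_supNorm_lt_top hξ hK hne hτ

theorem lowerDens_setOf_supNorm_log_riemannZeta_lt_eq_zero (hξ : riemannZeta ξ = 0)
    (hK : AccPt ξ (𝓟 K)) (ε : ℝ) :
    lowerDens {τ : ℝ | supNorm K (fun s ↦ log (riemannZeta (s + τ * I)) - log (riemannZeta s)) <
      ENNReal.ofReal ε} = 0 :=
  lowerDens_eq_zero_of_volume_eq_zero <| Countable.measure_zero
    ((countable_setOf_supNorm_log_riemannZeta_lt_top hξ hK).mono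
      fun _ hτ ↦ hτ.trans ENNReal.ofReal_lt_top) _

theorem zeta_zero_in_strip_implies_zero_density_general {U : Set ℂ} (hU : U ∈ 𝓝 ξ)
    (hξ : riemannZeta ξ = 0) :
    ∃ K : Set ℂ, IsCompact K ∧ K ⊆ U ∧ IsConnected Kᶜ ∧ ∀ ε : ℝ,
      lowerDens {τ : ℝ | supNorm K (fun s ↦ log (riemannZeta (s + τ * I)) - log (riemannZeta s)) <
        ENNReal.ofReal ε} = 0 := by
  obtain ⟨r, hr, hrU⟩ := nhds_basis_closedBall.mem_iff.1 hU
  have hacc : AccPt ξ (𝓟 (closedBall ξ r)) := accPt_iff_frequently_nhdsNE.2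
    (eventually_nhdsWithin_of_eventually_nhds (closedBall_mem_nhds ξ hr)).frequently
  exact ⟨closedBall ξ r, isCompact_closedBall ξ r, hrU,
    isConnected_compl_closedBall (by simp) ξ hr.le,
    lowerDens_setOf_supNorm_log_riemannZeta_lt_eq_zero hξ hacc⟩

end RiemannZeta

theorem zeta_zero_in_strip_implies_zero_density (ξ : ℂ) (hξ : riemannZeta ξ = 0)
    (hξD : ξ ∈ strip) :
    ∃ K : Set ℂ, IsCompact K ∧ K ⊆ strip ∧ IsConnected Kᶜ ∧ ∃ ε : ℝ, 0 < ε ∧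
      lowerDens {τ : ℝ |
        supNorm K (fun s => Complex.log (riemannZeta (s + τ * Complex.I))
          - Complex.log (riemannZeta s)) < ENNReal.ofReal ε} = 0 := by
  obtain ⟨K, hK, hKD, hKc, hdens⟩ :=
    zeta_zero_in_strip_implies_zero_density_general (isOpen_strip.mem_nhds hξD) hξ
  exact ⟨K, hK, hKD, hKc, 1, one_pos, hdens 1⟩
end

section
/- Let a, b be coprime integers with |a − b| ≥ 2, and let c = a or c = b. Let p_m denote the m-th prime and define ω(p_m) := exp(2πi m/(a−b)). Then for every real z ≥ 2 and every s ∈ ℂ with σ := Re(s) > 1/2, the finite twisted Euler product ζ_z(s, ω^c) := ∏_{p ≤ z, p prime} (1 − ω(p)^c p^{−s})^{−1} satisfies |ζ_z(s, ω^c)| ≤ exp( 7(1 − z^{1−2σ})/(2σ − 1) + |a−b|·( z^{−σ} + 2|s|·(1 − z^{−σ}) ) ). -/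
open Complex Finset
open scoped Real

/-- `ω(p_m) := exp(2πi m / (a - b))` where `p_m` is the `m`-th prime
(`p_1 = 2`, i.e. the prime `p` has 1-based index `Nat.count Nat.Prime p + 1`). -/
noncomputable def omegaP (a b : ℤ) (p : ℕ) : ℂ :=
  Complex.exp (2 * Real.pi * Complex.I * ((Nat.count Nat.Prime p : ℂ) + 1)
    / ((a : ℂ) - (b : ℂ)))

/-- The finite set of primes `p ≤ z`. -/
noncomputable def primesUpTo (z : ℝ) : Finset ℕ := (Finset.Iic ⌊z⌋₊).filter Nat.Prime

/-- The finite twisted Euler product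
`ζ_z(s, ω^c) := ∏_{p ≤ z prime} (1 - ω(p)^c p^{-s})⁻¹`. -/
noncomputable def zetaZ (a b : ℤ) (c : ℤ) (z : ℝ) (s : ℂ) : ℂ :=
  ∏ p ∈ primesUpTo z, (1 - (omegaP a b p) ^ c * (p : ℂ) ^ (-s))⁻¹

/-!
For `|w|² ≤ 1/2` the logarithmic series gives `|1 - w|⁻¹ ≤ exp (Re w + 2|w|²)`. Applied to the
Euler factors `w = ω(p)^c p^{-s}`, the squares contribute at most `2 ∑_{2 ≤ n ≤ z} n^{-2σ}`, which
is compared with `2 ∫₁^z t^{-2σ} dt`. For the linear term, `ω(p_m)^c = r^m` with `r ≠ 1` an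
`|a - b|`-th root of unity, because a common divisor `a - b` of `a` and `b` would be a unit. The
partial sums of `r^m` are bounded by `|a - b|`, and Abel summation against `t^{-s}` finishes the
estimate.
-/

theorem norm_inv_one_sub_le_exp {w : ℂ} (hw : ‖w‖ < 1) :
    ‖(1 - w)⁻¹‖ ≤ Real.exp (w.re + ‖w‖ ^ 2 * (1 - ‖w‖)⁻¹ / 2) := by
  have hne : (1 - w)⁻¹ ≠ 0 :=
    inv_ne_zero (sub_ne_zero.2 (ne_of_apply_ne norm (by simpa using hw.ne')))
  have hre : Real.log ‖(1 - w)⁻¹‖ - w.re ≤ ‖w‖ ^ 2 * (1 - ‖w‖)⁻¹ / 2 := by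
    rw [← log_re, ← sub_re]
    exact (re_le_norm _).trans (norm_log_one_sub_inv_sub_self_le hw)
  rw [← Real.log_le_iff_le_exp (norm_pos_iff.2 hne)]
  linarith

theorem norm_inv_one_sub_le_exp_of_sq_le_half {w : ℂ} (hw : ‖w‖ ^ 2 ≤ 1 / 2) :
    ‖(1 - w)⁻¹‖ ≤ Real.exp (w.re + 2 * ‖w‖ ^ 2) := by
  have hw' : ‖w‖ ≤ 3 / 4 := by nlinarith
  have hinv : (1 - ‖w‖)⁻¹ ≤ 4 := inv_le_of_inv_le₀ (by norm_num) (by linarith)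
  refine (norm_inv_one_sub_le_exp (by linarith)).trans (Real.exp_le_exp.2 ?_)
  linarith [mul_le_mul_of_nonneg_left hinv (sq_nonneg ‖w‖)]

theorem norm_geom_sum_le_of_pow_eq_one {K : Type*} [NormedDivisionRing K] {r : K} {q : ℕ}
    (hq : q ≠ 0) (hrq : r ^ q = 1) (hr : r ≠ 1) (k : ℕ) : ‖∑ i ∈ range k, r ^ i‖ ≤ q := by
  have hmod : ∑ i ∈ range k, r ^ i = ∑ i ∈ range (k % q), r ^ i := by
    rw [geom_sum_eq hr, geom_sum_eq hr, pow_eq_pow_mod k hrq]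
  have hnorm : ‖r‖ = 1 :=
    (isOfFinOrder_iff_pow_eq_one.2 ⟨q, Nat.pos_of_ne_zero hq, hrq⟩).norm_eq_one
  calc ‖∑ i ∈ range k, r ^ i‖ ≤ ∑ i ∈ range (k % q), ‖r ^ i‖ := hmod ▸ norm_sum_le _ _
    _ = (k % q : ℕ) := by simp [hnorm]
    _ ≤ q := by exact_mod_cast (Nat.mod_lt k (Nat.pos_of_ne_zero hq)).le

theorem not_sub_dvd_of_isCoprime {R : Type*} [CommRing R] {a b c : R} (hab : IsCoprime a b)
    (hunit : ¬ IsUnit (a - b)) (hc : c = a ∨ c = b) : ¬ (a - b) ∣ c := by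
  have hiff : (a - b) ∣ a ↔ (a - b) ∣ b := dvd_iff_dvd_of_dvd_sub dvd_rfl
  intro hdvd
  have ha : (a - b) ∣ a := by rcases hc with rfl | rfl <;> tauto
  exact hunit (hab.isUnit_of_dvd' ha (hiff.1 ha))

theorem sum_filter_range_count {M : Type*} [AddCommMonoid M] (P : ℕ → Prop) [DecidablePred P]
    (g : ℕ → M) (k : ℕ) :
    ∑ n ∈ range k with P n, g (Nat.count P n) = ∑ i ∈ range (Nat.count P k), g i := by
  induction k with
  | zero => simp
  | succ k ih =>
    rw [range_add_one, filter_insert, Nat.count_succ]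
    split_ifs with h
    · rw [sum_insert (by simp), sum_range_succ, ih, add_comm]
    · exact ih

theorem sum_Ioc_one_rpow_neg_le {α z : ℝ} (hα : 0 ≤ α) (hα1 : α ≠ 1) (hz : 1 ≤ z) :
    ∑ n ∈ Ioc 1 ⌊z⌋₊, (n : ℝ) ^ (-α) ≤ (1 - z ^ (1 - α)) / (α - 1) := by
  have hfloor : 1 ≤ ⌊z⌋₊ := Nat.le_floor (by simpa using hz)
  have hanti : AntitoneOn (fun t : ℝ ↦ t ^ (-α)) (Set.Icc (1 : ℕ) ⌊z⌋₊) := fun x hx y _ hxy ↦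
    Real.rpow_le_rpow_of_nonpos (one_pos.trans_le (by simpa using hx.1)) hxy (by linarith)
  have hzero : (0 : ℝ) ∉ Set.uIcc 1 z := by simp [Set.uIcc_of_le hz]
  calc ∑ n ∈ Ioc 1 ⌊z⌋₊, (n : ℝ) ^ (-α)
      = ∑ n ∈ Ico 1 ⌊z⌋₊, ((n + 1 : ℕ) : ℝ) ^ (-α) := by
        rw [sum_Ico_add' (fun n : ℕ ↦ (n : ℝ) ^ (-α)), Ico_add_one_add_one_eq_Ioc]
    _ ≤ ∫ t in ((1 : ℕ) : ℝ)..⌊z⌋₊, t ^ (-α) := hanti.sum_le_integral_Ico hfloor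
    _ ≤ ∫ t in (1 : ℝ)..z, t ^ (-α) := by
        rw [Nat.cast_one]
        refine intervalIntegral.integral_mono_interval le_rfl (by exact_mod_cast hfloor)
          (Nat.floor_le (by linarith)) ?_ (intervalIntegral.intervalIntegrable_rpow (.inr hzero))
        exact MeasureTheory.ae_restrict_of_forall_mem measurableSet_Ioc
          fun t ht ↦ Real.rpow_nonneg (by linarith [ht.1]) _
    _ = (1 - z ^ (1 - α)) / (α - 1) := by
        rw [integral_rpow (.inr ⟨by simpa using hα1, hzero⟩), Real.one_rpow, neg_add_eq_sub,
          ← neg_div_neg_eq, neg_sub, neg_sub]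

theorem norm_integral_cpow_neg_sub_one_mul_le {s : ℂ} (hs : s.re ≠ 0) {z : ℝ} (hz : 1 ≤ z)
    {A : ℝ → ℂ} {Q : ℝ} (hA : ∀ t ∈ Set.Ioc 1 z, ‖A t‖ ≤ Q) :
    ‖∫ t in (1 : ℝ)..z, (t : ℂ) ^ (-s - 1) * A t‖ ≤ Q * ((1 - z ^ (-s.re)) / s.re) := by
  have hzero : (0 : ℝ) ∉ Set.uIcc 1 z := by simp [Set.uIcc_of_le hz]
  calc ‖∫ t in (1 : ℝ)..z, (t : ℂ) ^ (-s - 1) * A t‖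
      ≤ ∫ t in (1 : ℝ)..z, t ^ (-s.re - 1) * Q := by
        refine intervalIntegral.norm_integral_le_of_norm_le hz (.of_forall fun t ht ↦ ?_)
          ((intervalIntegral.intervalIntegrable_rpow (.inr hzero)).mul_const _)
        have ht0 : 0 < t := one_pos.trans ht.1
        rw [norm_mul, norm_cpow_eq_rpow_re_of_pos ht0, sub_re, neg_re, one_re]
        exact mul_le_mul_of_nonneg_left (hA t ht) (Real.rpow_nonneg ht0.le _)
    _ = Q * ((1 - z ^ (-s.re)) / s.re) := by
        rw [intervalIntegral.integral_mul_const,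
          integral_rpow (.inr ⟨by simpa using hs, hzero⟩), sub_add_cancel, Real.one_rpow, div_neg,
          ← neg_div, neg_sub, mul_comm]

theorem norm_sum_cpow_neg_mul_le {c : ℕ → ℂ} {Q : ℝ} (hc0 : c 0 = 0)
    (hQ : ∀ n, ‖∑ k ∈ Icc 0 n, c k‖ ≤ Q) {s : ℂ} (hs : s.re ≠ 0) {z : ℝ} (hz : 1 ≤ z) :
    ‖∑ k ∈ Icc 0 ⌊z⌋₊, (k : ℂ) ^ (-s) * c k‖ ≤
      Q * (z ^ (-s.re) + ‖s‖ / s.re * (1 - z ^ (-s.re))) := by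
  set A : ℝ → ℂ := fun t ↦ ∑ k ∈ Icc 0 ⌊t⌋₊, c k
  have hderiv : ∀ t ∈ Set.Icc 1 z,
      HasDerivAt (fun u : ℝ ↦ (u : ℂ) ^ (-s)) (-s * (t : ℂ) ^ (-s - 1)) t := fun t ht ↦
    hasDerivAt_ofReal_cpow_const (one_pos.trans_le ht.1).ne' (neg_ne_zero.2 (ne_of_apply_ne re hs))
  have hint : MeasureTheory.IntegrableOn (deriv fun u : ℝ ↦ (u : ℂ) ^ (-s)) (Set.Icc 1 z) := by
    have hcpow := (intervalIntegral.intervalIntegrable_cpow (μ := MeasureTheory.volume)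
      (r := -s - 1) (.inr (by simp [Set.uIcc_of_le hz] : (0 : ℝ) ∉ Set.uIcc 1 z))).const_mul (-s)
    rw [intervalIntegrable_iff_integrableOn_Icc_of_le hz] at hcpow
    exact hcpow.congr_fun (fun t ht ↦ (hderiv t ht).deriv.symm) measurableSet_Icc
  have habel : ∑ k ∈ Icc 0 ⌊z⌋₊, (k : ℂ) ^ (-s) * c k =
      (z : ℂ) ^ (-s) * A z + s * ∫ t in (1 : ℝ)..z, (t : ℂ) ^ (-s - 1) * A t := by
    have hsum := sum_mul_eq_sub_integral_mul₀ (f := fun u : ℝ ↦ (u : ℂ) ^ (-s)) c hc0 z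
      (fun t ht ↦ (hderiv t ht).differentiableAt) hint
    simp only [ofReal_natCast] at hsum
    rw [hsum, MeasureTheory.setIntegral_congr_fun measurableSet_Ioc fun t ht ↦ by
      rw [(hderiv t ⟨ht.1.le, ht.2⟩).deriv, mul_assoc], MeasureTheory.integral_const_mul, neg_mul,
      sub_neg_eq_add, intervalIntegral.integral_of_le hz]
  calc ‖∑ k ∈ Icc 0 ⌊z⌋₊, (k : ℂ) ^ (-s) * c k‖
      ≤ ‖(z : ℂ) ^ (-s) * A z‖ + ‖s * ∫ t in (1 : ℝ)..z, (t : ℂ) ^ (-s - 1) * A t‖ :=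
        habel ▸ norm_add_le _ _
    _ ≤ z ^ (-s.re) * Q + ‖s‖ * (Q * ((1 - z ^ (-s.re)) / s.re)) := by
        rw [norm_mul, norm_mul, norm_cpow_eq_rpow_re_of_pos (one_pos.trans_le hz), neg_re]
        gcongr
        · exact hQ _
        · exact norm_integral_cpow_neg_sub_one_mul_le hs hz fun t _ ↦ hQ _
    _ = Q * (z ^ (-s.re) + ‖s‖ / s.re * (1 - z ^ (-s.re))) := by ring

theorem primesUpTo_eq_filter_range (z : ℝ) :
    primesUpTo z = (range (⌊z⌋₊ + 1)).filter Nat.Prime := by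
  ext p
  simp [primesUpTo]

theorem mem_primesUpTo {z : ℝ} {p : ℕ} : p ∈ primesUpTo z ↔ p ≤ ⌊z⌋₊ ∧ p.Prime := by
  simp [primesUpTo]

theorem sum_primesUpTo_rpow_neg_le {α z : ℝ} (hα : 0 ≤ α) (hα1 : α ≠ 1) (hz : 1 ≤ z) :
    ∑ p ∈ primesUpTo z, (p : ℝ) ^ (-α) ≤ (1 - z ^ (1 - α)) / (α - 1) := by
  have hsub : primesUpTo z ⊆ Ioc 1 ⌊z⌋₊ := fun p hp ↦
    have ⟨hle, hprime⟩ := mem_primesUpTo.1 hp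
    mem_Ioc.2 ⟨hprime.one_lt, hle⟩
  exact (sum_le_sum_of_subset_of_nonneg hsub fun _ _ _ ↦ by positivity).trans
    (sum_Ioc_one_rpow_neg_le hα hα1 hz)

theorem norm_sum_primesUpTo_mul_cpow_neg_le {χ : ℕ → ℂ} {Q : ℝ}
    (hQ : ∀ t, ‖∑ p ∈ primesUpTo t, χ p‖ ≤ Q) {s : ℂ} (hs : s.re ≠ 0) {z : ℝ} (hz : 1 ≤ z) :
    ‖∑ p ∈ primesUpTo z, χ p * (p : ℂ) ^ (-s)‖ ≤
      Q * (z ^ (-s.re) + ‖s‖ / s.re * (1 - z ^ (-s.re))) := by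
  have hsum (n : ℕ) : ‖∑ k ∈ Icc 0 n, if k.Prime then χ k else 0‖ ≤ Q := by
    simpa [primesUpTo, sum_filter, Iic_eq_Icc] using hQ n
  simpa [primesUpTo, sum_filter, Iic_eq_Icc, mul_comm] using
    norm_sum_cpow_neg_mul_le (by simp [Nat.not_prime_zero]) hsum hs hz

theorem norm_inv_one_sub_mul_cpow_neg_le {s : ℂ} (hs : 1 / 2 ≤ s.re) {p : ℕ} (hp : 2 ≤ p)
    {u : ℂ} (hu : ‖u‖ ≤ 1) :
    ‖(1 - u * (p : ℂ) ^ (-s))⁻¹‖ ≤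
      Real.exp ((u * (p : ℂ) ^ (-s)).re + 2 * (p : ℝ) ^ (-(2 * s.re))) := by
  have hp2 : (2 : ℝ) ≤ p := by exact_mod_cast hp
  have hsq : ‖u * (p : ℂ) ^ (-s)‖ ^ 2 ≤ (p : ℝ) ^ (-(2 * s.re)) := by
    rw [norm_mul, mul_pow, norm_natCast_cpow_of_pos (by lia), neg_re, ← Real.rpow_mul_natCast
      p.cast_nonneg, show -s.re * (2 : ℕ) = -(2 * s.re) by push_cast; ring]
    exact mul_le_of_le_one_left (by positivity) (pow_le_one₀ (norm_nonneg u) hu)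
  have hhalf : (p : ℝ) ^ (-(2 * s.re)) ≤ 1 / 2 :=
    calc (p : ℝ) ^ (-(2 * s.re)) ≤ (p : ℝ) ^ (-1 : ℝ) :=
          Real.rpow_le_rpow_of_exponent_le (by linarith) (by linarith)
      _ ≤ 1 / 2 := by
          rw [Real.rpow_neg_one, one_div]
          exact inv_anti₀ two_pos hp2
  refine (norm_inv_one_sub_le_exp_of_sq_le_half (hsq.trans hhalf)).trans ?_
  gcongr

theorem norm_prod_primesUpTo_inv_one_sub_le {χ : ℕ → ℂ} (hχ : ∀ p : ℕ, p.Prime → ‖χ p‖ ≤ 1)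
    {Q : ℝ} (hQ : ∀ t, ‖∑ p ∈ primesUpTo t, χ p‖ ≤ Q) {s : ℂ} (hs : 1 / 2 < s.re)
    {z : ℝ} (hz : 1 ≤ z) :
    ‖∏ p ∈ primesUpTo z, (1 - χ p * (p : ℂ) ^ (-s))⁻¹‖ ≤
      Real.exp (2 * (1 - z ^ (1 - 2 * s.re)) / (2 * s.re - 1) +
        Q * (z ^ (-s.re) + ‖s‖ / s.re * (1 - z ^ (-s.re)))) := by
  have hmain : (∑ p ∈ primesUpTo z, χ p * (p : ℂ) ^ (-s)).re ≤
      Q * (z ^ (-s.re) + ‖s‖ / s.re * (1 - z ^ (-s.re))) :=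
    (re_le_norm _).trans (norm_sum_primesUpTo_mul_cpow_neg_le hQ (by linarith) hz)
  have herror : ∑ p ∈ primesUpTo z, (p : ℝ) ^ (-(2 * s.re)) ≤
      (1 - z ^ (1 - 2 * s.re)) / (2 * s.re - 1) :=
    sum_primesUpTo_rpow_neg_le (by linarith) (by linarith) hz
  calc ‖∏ p ∈ primesUpTo z, (1 - χ p * (p : ℂ) ^ (-s))⁻¹‖
      ≤ ∏ p ∈ primesUpTo z,
          Real.exp ((χ p * (p : ℂ) ^ (-s)).re + 2 * (p : ℝ) ^ (-(2 * s.re))) := by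
        rw [norm_prod]
        refine prod_le_prod (fun _ _ ↦ norm_nonneg _) fun p hp ↦ ?_
        have hprime : p.Prime := (mem_primesUpTo.1 hp).2
        exact norm_inv_one_sub_mul_cpow_neg_le hs.le hprime.two_le (hχ p hprime)
    _ = Real.exp ((∑ p ∈ primesUpTo z, χ p * (p : ℂ) ^ (-s)).re +
          2 * ∑ p ∈ primesUpTo z, (p : ℝ) ^ (-(2 * s.re))) := by
        rw [← Real.exp_sum, sum_add_distrib, re_sum, mul_sum]
    _ ≤ _ := by
        rw [Real.exp_le_exp, mul_div_assoc]
        linarith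

theorem omegaP_two (a b : ℤ) : omegaP a b 2 = Complex.exp (2 * π * I / ((a - b : ℤ) : ℂ)) := by
  have hcount : Nat.count Nat.Prime 2 = 0 := by decide
  simp [omegaP, hcount]

theorem omegaP_eq_omegaP_two_pow (a b : ℤ) (p : ℕ) :
    omegaP a b p = omegaP a b 2 ^ (Nat.count Nat.Prime p + 1) := by
  rw [omegaP_two, omegaP, ← Complex.exp_nat_mul]
  congr 1
  push_cast
  ring

theorem isPrimitiveRoot_omegaP_two {a b : ℤ} (hab : a ≠ b) :
    IsPrimitiveRoot (omegaP a b 2) (a - b).natAbs := by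
  have hroot := Complex.isPrimitiveRoot_exp (a - b).natAbs (by simpa [sub_eq_zero] using hab)
  rcases Int.natAbs_eq (a - b) with h | h
  · rwa [omegaP_two, h, Int.cast_natCast, Int.natAbs_natCast]
  · rw [omegaP_two, h, Int.cast_neg, Int.cast_natCast, div_neg, Complex.exp_neg, Int.natAbs_neg,
      Int.natAbs_natCast]
    exact hroot.inv

theorem norm_omegaP (a b : ℤ) (p : ℕ) : ‖omegaP a b p‖ = 1 := by
  have hreal : 2 * (π : ℂ) * I * ((Nat.count Nat.Prime p : ℂ) + 1) / ((a : ℂ) - (b : ℂ)) =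
      ((2 * π * (Nat.count Nat.Prime p + 1) / (a - b) : ℝ) : ℂ) * I := by
    push_cast
    ring
  rw [omegaP, hreal, norm_exp_ofReal_mul_I]

theorem norm_sum_omegaP_zpow_le {a b c : ℤ} (hab : a ≠ b) (hc : ¬ (a - b) ∣ c) (z : ℝ) :
    ‖∑ p ∈ primesUpTo z, omegaP a b p ^ c‖ ≤ |(a : ℝ) - b| := by
  have hroot := isPrimitiveRoot_omegaP_two hab
  set r : ℂ := omegaP a b 2 ^ c with hr
  have hr1 : r ≠ 1 := by rwa [hr, Ne, hroot.zpow_eq_one_iff_dvd, Int.natAbs_dvd]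
  have hrq : r ^ (a - b).natAbs = 1 := by
    rw [hr, ← zpow_natCast, zpow_comm, zpow_natCast, hroot.pow_eq_one, one_zpow]
  have hq : (a - b).natAbs ≠ 0 := by simpa [sub_eq_zero] using hab
  have hsum : ∑ p ∈ primesUpTo z, omegaP a b p ^ c =
      r * ∑ i ∈ range (Nat.count Nat.Prime (⌊z⌋₊ + 1)), r ^ i := by
    rw [← sum_filter_range_count, mul_sum, primesUpTo_eq_filter_range]
    refine sum_congr rfl fun p _ ↦ ?_
    rw [omegaP_eq_omegaP_two_pow, ← zpow_natCast, zpow_comm, zpow_natCast, pow_succ']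
  calc ‖∑ p ∈ primesUpTo z, omegaP a b p ^ c‖
      = ‖∑ i ∈ range (Nat.count Nat.Prime (⌊z⌋₊ + 1)), r ^ i‖ := by
        rw [hsum, norm_mul, norm_eq_one_of_pow_eq_one hrq hq, one_mul]
    _ ≤ (a - b).natAbs := norm_geom_sum_le_of_pow_eq_one hq hrq hr1 _
    _ = |(a : ℝ) - b| := by rw [Nat.cast_natAbs, Int.cast_abs, Int.cast_sub]

theorem zetaZ_bound_general {a b : ℤ} (hab : a ≠ b) {c : ℤ} (hc : ¬ (a - b) ∣ c) {z : ℝ}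
    (hz : 1 ≤ z) {s : ℂ} (hs : 1 / 2 < s.re) :
    ‖zetaZ a b c z s‖ ≤
      Real.exp (2 * (1 - z ^ (1 - 2 * s.re)) / (2 * s.re - 1)
        + |(a : ℝ) - (b : ℝ)| * (z ^ (-s.re) + ‖s‖ / s.re * (1 - z ^ (-s.re)))) :=
  norm_prod_primesUpTo_inv_one_sub_le (fun p _ ↦ by rw [norm_zpow, norm_omegaP, one_zpow])
    (norm_sum_omegaP_zpow_le hab hc) hs hz

theorem zetaZ_sharp_exponent_le {σ t Q z : ℝ} (hσ : 1 / 2 < σ) (ht : 0 ≤ t) (hQ : 0 ≤ Q)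
    (hz : 1 ≤ z) :
    2 * (1 - z ^ (1 - 2 * σ)) / (2 * σ - 1) + Q * (z ^ (-σ) + t / σ * (1 - z ^ (-σ))) ≤
      7 * (1 - z ^ (1 - 2 * σ)) / (2 * σ - 1) + Q * (z ^ (-σ) + 2 * t * (1 - z ^ (-σ))) := by
  have hsquares : 0 ≤ 1 - z ^ (1 - 2 * σ) :=
    sub_nonneg.2 (Real.rpow_le_one_of_one_le_of_nonpos hz (by linarith))
  have hlinear : 0 ≤ 1 - z ^ (-σ) :=
    sub_nonneg.2 (Real.rpow_le_one_of_one_le_of_nonpos hz (by linarith))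
  have hcoeff : t / σ ≤ 2 * t := by
    rw [div_le_iff₀ (by linarith)]
    nlinarith
  have hden : 0 ≤ 2 * σ - 1 := by linarith
  gcongr
  norm_num

theorem zetaZ_bound (a b : ℤ) (hab : IsCoprime a b) (h2 : 2 ≤ |a - b|)
    (c : ℤ) (hc : c = a ∨ c = b) (z : ℝ) (hz : 2 ≤ z) (s : ℂ) (hσ : 1/2 < s.re) :
    ‖zetaZ a b c z s‖ ≤
      Real.exp (7 * (1 - z ^ (1 - 2 * s.re)) / (2 * s.re - 1)
        + |(a : ℝ) - (b : ℝ)| * (z ^ (-s.re) + 2 * ‖s‖ * (1 - z ^ (-s.re)))) :=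
  (zetaZ_bound_general (by rintro rfl; simp at h2)
    (not_sub_dvd_of_isCoprime hab (Int.isUnit_iff_abs_eq.not.2 (by lia)) hc) (by linarith)
    hσ).trans <| Real.exp_le_exp.2 <|
      zetaZ_sharp_exponent_le hσ (norm_nonneg s) (abs_nonneg _) (by linarith)
end

section
/- Let q be a nonzero integer and let p_m denote the m-th prime. Then for every real z ≥ 2 and every δ > 0, the set of positive real numbers τ satisfying max_{m : p_m ≤ z} ‖ τ·(log p_m)/(2π) − m/q ‖ < δ has positive lower density; that is, liminf_{T→∞} (1/T)·μ{τ ∈ [0,T] : max_{m : p_m ≤ z} ‖ τ·(log p_m)/(2π) − m/q ‖ < δ} > 0. -/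
/-!
By unique factorization the numbers `log p` are linearly independent over `ℤ`, so every nontrivial
character of a finite-dimensional torus restricts to a nontrivial character of the real line along
the flow `t ↦ (t * log p / (2 * π))_p`. Its averages over `[0, T]` vanish in the limit
(Riemann–Lebesgue). Since the characters span a dense space of continuous functions, the empirical
measures of the flow converge weakly to Haar measure, and by the portmanteau theorem the times spent
in an open ball have lower density at least the Haar measure of that ball, which is positive.
-/

open MeasureTheory Filter

/-- Distance from a real number to the nearest integer. -/
noncomputable def distNearestInt (x : ℝ) : ℝ := |x - round x|

open Topology
open scoped FourierTransform

section WeakConvergence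

variable {X : Type*} [TopologicalSpace X] [CompactSpace X] [MeasurableSpace X]
  [OpensMeasurableSpace X]

theorem integrable_continuousMap {E : Type*} [NormedAddCommGroup E] (μ : Measure X)
    [IsFiniteMeasureOnCompacts μ] (f : C(X, E)) : Integrable f μ :=
  f.continuous.integrable_of_hasCompactSupport (.of_compactSpace f)

theorem lipschitzWith_integral_continuousMap {E : Type*} [NormedAddCommGroup E] [NormedSpace ℝ E]
    (μ : Measure X) [IsFiniteMeasure μ] :
    LipschitzWith (measureUnivNNReal μ) fun f : C(X, E) => ∫ x, f x ∂μ := by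
  refine LipschitzWith.of_dist_le_mul fun f g => ?_
  rw [dist_eq_norm, ← integral_sub (integrable_continuousMap μ f) (integrable_continuousMap μ g)]
  refine (norm_integral_le_of_norm_le_const (.of_forall (f - g).norm_coe_le_norm)).trans_eq ?_
  rw [dist_eq_norm, mul_comm]
  rfl

theorem tendsto_probabilityMeasure_of_dense_span {ι 𝕜 : Type*} [RCLike 𝕜] {l : Filter ι}
    {μs : ι → ProbabilityMeasure X} {μ : ProbabilityMeasure X} {S : Set C(X, 𝕜)}
    (hS : (Submodule.span 𝕜 S).topologicalClosure = ⊤)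
    (h : ∀ f ∈ S, Tendsto (fun i => ∫ x, f x ∂(μs i : Measure X)) l
      (𝓝 (∫ x, f x ∂(μ : Measure X)))) :
    Tendsto μs l (𝓝 μ) := by
  have lipschitz (ν : ProbabilityMeasure X) :
      LipschitzWith 1 fun f : C(X, 𝕜) => ∫ x, f x ∂(ν : Measure X) := by
    simpa [measureUnivNNReal] using lipschitzWith_integral_continuousMap (E := 𝕜) (ν : Measure X)
  let V : Submodule 𝕜 C(X, 𝕜) :=
    { carrier := {f | Tendsto (fun i => ∫ x, f x ∂(μs i : Measure X)) l
        (𝓝 (∫ x, f x ∂(μ : Measure X)))}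
      zero_mem' := by simp [tendsto_const_nhds]
      add_mem' := fun {f g} hf hg => by
        simpa [integral_add, integrable_continuousMap] using hf.add hg
      smul_mem' := fun c f hf => by simpa [integral_const_mul] using hf.const_mul c }
  have isClosed_V : IsClosed (V : Set C(X, 𝕜)) :=
    (LipschitzWith.uniformEquicontinuous _ 1 fun i =>
      lipschitz (μs i)).equicontinuous.isClosed_setOfPred_tendsto (lipschitz μ).continuous
  have V_eq_top : V = ⊤ := top_unique <| hS ▸
    Submodule.topologicalClosure_minimal _ (Submodule.span_le.2 h) isClosed_V
  rw [ProbabilityMeasure.tendsto_iff_forall_integral_rclike_tendsto 𝕜]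
  exact fun f => (V_eq_top ▸ Submodule.mem_top : f.toContinuousMap ∈ V)

end WeakConvergence

section TimeAverage

variable {X : Type*} [MeasurableSpace X] {γ : ℝ → X}

/-- The empirical measure of the trajectory `γ` over `[0, T]`, encoded as the law of `γ (T * s)` for
`s` uniform on `[0, 1]` so that it is a probability measure even for `T ≤ 0`. -/
noncomputable def timeAverage (hγ : Measurable γ) (T : ℝ) : ProbabilityMeasure X :=
  ⟨(volume : Measure unitInterval).map fun s : unitInterval => γ (T * s),
    Measure.isProbabilityMeasure_map (by fun_prop)⟩

theorem timeAverage_apply (hγ : Measurable γ) {T : ℝ} (hT : 0 < T) {A : Set X}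
    (hA : MeasurableSet A) :
    (timeAverage hγ T : Measure X) A = volume (γ ⁻¹' A ∩ Set.Icc 0 T) / ENNReal.ofReal T := by
  have rescale : Subtype.val '' ((fun s : unitInterval => γ (T * s)) ⁻¹' A) =
      (T * ·) ⁻¹' (γ ⁻¹' A ∩ Set.Icc 0 T) := by
    ext s
    simp [hT, div_self hT.ne', and_comm]
  rw [timeAverage, ProbabilityMeasure.coe_mk, Measure.map_apply (by fun_prop) hA,
    unitInterval.volume_def, (MeasurableEmbedding.subtype_coe measurableSet_Icc).comap_apply,
    rescale, Real.volume_preimage_mul_left hT.ne', abs_of_pos (inv_pos.2 hT),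
    ENNReal.ofReal_inv_of_pos hT, ENNReal.div_eq_inv_mul]

theorem integral_timeAverage {E : Type*} [NormedAddCommGroup E] [NormedSpace ℝ E]
    (hγ : Measurable γ) {T : ℝ} {f : X → E}
    (hf : AEStronglyMeasurable f (timeAverage hγ T : Measure X)) :
    ∫ x, f x ∂(timeAverage hγ T : Measure X) = ∫ s in Set.Icc (0 : ℝ) 1, f (γ (T * s)) := by
  refine (integral_map (by fun_prop) hf).trans ?_
  exact integral_subtype measurableSet_Icc fun s => f (γ (T * s))

theorem lowerDens_preimage (hγ : Measurable γ) {A : Set X} (hA : MeasurableSet A) :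
    lowerDens (γ ⁻¹' A) = (liminf (fun T => (timeAverage hγ T : Measure X) A) atTop).toReal := by
  rw [← ENNReal.liminf_toReal_eq ENNReal.one_ne_top (.of_forall fun _ => prob_le_one), lowerDens]
  refine liminf_congr ?_
  filter_upwards [eventually_gt_atTop 0] with T hT
  rw [timeAverage_apply hγ hT hA, ENNReal.toReal_div, ENNReal.toReal_ofReal hT.le]

theorem measureReal_le_lowerDens_preimage [TopologicalSpace X] [OpensMeasurableSpace X]
    [HasOuterApproxClosed X] (hγ : Measurable γ) {μ : ProbabilityMeasure X}
    (hμ : Tendsto (timeAverage hγ) atTop (𝓝 μ)) {U : Set X} (hU : IsOpen U) :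
    (μ : Measure X).real U ≤ lowerDens (γ ⁻¹' U) := by
  rw [lowerDens_preimage hγ hU.measurableSet]
  refine ENNReal.toReal_mono (ne_top_of_le_ne_top ENNReal.one_ne_top ?_)
    (ProbabilityMeasure.le_liminf_measure_open_of_tendsto hμ hU)
  exact (liminf_le_liminf (.of_forall fun _ => prob_le_one)).trans_eq (liminf_const 1)

end TimeAverage

theorem tendsto_setIntegral_fourierChar {c : ℝ} (hc : c ≠ 0) {A : Set ℝ}
    (hA : MeasurableSet A) :
    Tendsto (fun T : ℝ => ∫ s in A, (𝐞 (c * (T * s)) : ℂ)) atTop (𝓝 0) := by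
  have frequency : Tendsto (fun T : ℝ => -c * T) atTop (cocompact ℝ) :=
    (Homeomorph.mulLeft₀ (-c) (neg_ne_zero.2 hc)).isClosedEmbedding.tendsto_cocompact.comp
      (tendsto_id.mono_right atTop_le_cocompact)
  refine ((Real.tendsto_integral_exp_smul_cocompact (A.indicator fun _ => (1 : ℂ))).comp
    frequency).congr fun T => ?_
  rw [← integral_indicator hA]
  refine integral_congr_ae (.of_forall fun s => ?_)
  have phase : s * (c * T) = c * (T * s) := by ring
  by_cases hs : s ∈ A <;> simp [hs, Circle.smul_def, phase]

section Torus

open UnitAddTorus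

variable {d : Type*}

/-- The orbit of the origin under the linear flow with frequency vector `ω` on the torus
`(ℝ/ℤ)^d`. -/
def linearFlow (ω : d → ℝ) (t : ℝ) : UnitAddTorus d := fun i => (t * ω i : ℝ)

@[fun_prop]
theorem continuous_linearFlow (ω : d → ℝ) : Continuous (linearFlow ω) := by
  unfold linearFlow
  fun_prop

variable [Fintype d]

theorem mFourier_linearFlow (n : d → ℤ) (ω : d → ℝ) (t : ℝ) :
    mFourier n (linearFlow ω t) = 𝐞 ((∑ i, n i * ω i) * t) := by
  simp only [mFourier, linearFlow, ContinuousMap.coe_mk, fourier_coe_apply, Real.fourierChar_apply,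
    ← Complex.exp_sum]
  congr 1
  push_cast
  simp only [Finset.sum_mul, Finset.mul_sum]
  exact Finset.sum_congr rfl fun i _ => by ring

instance isProbabilityMeasure_volume_unitAddCircle :
    IsProbabilityMeasure (volume : Measure UnitAddCircle) :=
  ⟨UnitAddCircle.measure_univ⟩

theorem integral_mFourier_eq_zero {n : d → ℤ} (hn : n ≠ 0) : ∫ x, mFourier n x = 0 := by
  obtain ⟨i, hi⟩ := Function.ne_iff.1 hn
  have := integral_eq_zero_of_add_right_eq_neg (μ := (volume : Measure UnitAddCircle))
    (fourier_add_half_inv_index hi one_pos)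
  exact (integral_fintype_prod_volume_eq_prod fun j => ⇑(fourier (T := 1) (n j))).trans
    (Finset.prod_eq_zero (Finset.mem_univ i) this)

theorem tendsto_timeAverage_linearFlow {ω : d → ℝ} (hω : LinearIndependent ℤ ω) :
    Tendsto (timeAverage (continuous_linearFlow ω).measurable) atTop
      (𝓝 ⟨(volume : Measure (UnitAddTorus d)), inferInstance⟩) := by
  refine tendsto_probabilityMeasure_of_dense_span span_mFourier_closure_eq_top ?_
  rintro _ ⟨n, rfl⟩
  obtain rfl | hn := eq_or_ne n 0
  · simp [mFourier_zero]
  · have frequency_ne_zero : ∑ i, n i * ω i ≠ 0 := fun h =>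
      hn <| funext <| Fintype.linearIndependent_iff.1 hω n <| by simpa using h
    simp only [integral_timeAverage _ (mFourier n).continuous.aestronglyMeasurable,
      mFourier_linearFlow, ProbabilityMeasure.coe_mk, integral_mFourier_eq_zero hn]
    exact tendsto_setIntegral_fourierChar frequency_ne_zero measurableSet_Icc

theorem distNearestInt_eq_norm (x : ℝ) : distNearestInt x = ‖(x : UnitAddCircle)‖ :=
  UnitAddCircle.norm_eq.symm

theorem lowerDens_setOf_distNearestInt_lt_pos {ι : Type*} [Finite ι] {ω : ι → ℝ}
    (hω : LinearIndependent ℤ ω) (α : ι → ℝ) {δ : ℝ} (hδ : 0 < δ) :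
    0 < lowerDens {t | ∀ i, distNearestInt (t * ω i - α i) < δ} := by
  have := Fintype.ofFinite ι
  have preimage_ball : {t | ∀ i, distNearestInt (t * ω i - α i) < δ} =
      linearFlow ω ⁻¹' Metric.ball (fun i => (α i : UnitAddCircle)) δ := by
    ext t
    simp [linearFlow, ball_pi _ hδ, distNearestInt_eq_norm, dist_eq_norm]
  rw [preimage_ball]
  refine lt_of_lt_of_le ?_ (measureReal_le_lowerDens_preimage _
    (tendsto_timeAverage_linearFlow hω) Metric.isOpen_ball)
  exact ENNReal.toReal_pos (Metric.measure_ball_pos volume _ hδ).ne' (measure_ne_top volume _)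

end Torus

theorem padic_prod_primes_zpow {s : Finset Nat.Primes} {q : Nat.Primes} (hq : q ∈ s)
    [Fact (q : ℕ).Prime] (g : Nat.Primes → ℤ) :
    Rat.AbsoluteValue.padic q (∏ p ∈ s, (p : ℚ) ^ g p) = (q : ℝ) ^ (-g q) := by
  rw [map_prod, Finset.prod_eq_single_of_mem q hq]
  · simp [map_zpow₀]
  · intro p _ hpq
    have := Fact.mk p.prop
    have : padicNorm q p = 1 := padicNorm.padicNorm_of_prime_of_ne fun h => hpq (Subtype.ext h.symm)
    simp [map_zpow₀, this]

theorem linearIndependent_log_primes :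
    LinearIndependent ℤ fun p : Nat.Primes => Real.log p := by
  rw [linearIndependent_iff']
  intro s g hg q hq
  have pos (p : Nat.Primes) : (0 : ℝ) < p := by exact_mod_cast p.prop.pos
  have log_prod : Real.log (∏ p ∈ s, (p : ℝ) ^ g p) = 0 := by
    rw [Real.log_prod fun p _ => (zpow_pos (pos p) _).ne']
    simpa [Real.log_zpow] using hg
  have prod_eq_one : ∏ p ∈ s, (p : ℚ) ^ g p = 1 := by
    have : ((∏ p ∈ s, (p : ℚ) ^ g p : ℚ) : ℝ) = 1 := by
      push_cast
      exact Real.eq_one_of_pos_of_log_eq_zero (Finset.prod_pos fun p _ => zpow_pos (pos p) _)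
        log_prod
    exact_mod_cast this
  have := Fact.mk q.prop
  have zpow_eq_one := padic_prod_primes_zpow hq g
  rw [prod_eq_one, map_one, eq_comm,
    zpow_eq_one_iff_right₀ (pos q).le (by exact_mod_cast q.prop.ne_one)] at zpow_eq_one
  exact neg_eq_zero.1 zpow_eq_one

theorem kronecker_positive_density_general (α : ℕ → ℝ) (z : ℝ) {δ : ℝ} (hδ : 0 < δ) :
    0 < lowerDens {τ : ℝ | ∀ n : ℕ, (Nat.nth Nat.Prime n : ℝ) ≤ z →
      distNearestInt (τ * Real.log (Nat.nth Nat.Prime n) / (2 * Real.pi) - α n) < δ} := by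
  have nth_strictMono := Nat.nth_strictMono Nat.infinite_setOfPred_prime
  have finite_index : {n : ℕ | (Nat.nth Nat.Prime n : ℝ) ≤ z}.Finite :=
    (Set.finite_Iic ⌊z⌋₊).subset fun n hn => nth_strictMono.le_apply.trans (Nat.le_floor hn)
  have := finite_index.to_subtype
  let prime (n : {n : ℕ | (Nat.nth Nat.Prime n : ℝ) ≤ z}) : Nat.Primes :=
    ⟨Nat.nth Nat.Prime n, Nat.prime_nth_prime n⟩
  have prime_injective : Function.Injective prime := fun m n h =>
    Subtype.ext (nth_strictMono.injective (congrArg Subtype.val h))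
  have linearIndependent : LinearIndependent ℤ fun n => Real.log (prime n) * (2 * Real.pi)⁻¹ :=
    (linearIndependent_log_primes.comp prime prime_injective).map'
      (LinearMap.mulRight ℤ (2 * Real.pi)⁻¹)
      (LinearMap.ker_eq_bot.2 (mul_left_injective₀ (by positivity)))
  simpa [Subtype.forall, prime, div_eq_mul_inv, mul_assoc] using
    lowerDens_setOf_distNearestInt_lt_pos linearIndependent (fun n => α n) hδ

theorem kronecker_positive_density (q : ℤ) (hq : q ≠ 0) (z : ℝ) (hz : 2 ≤ z)
    (δ : ℝ) (hδ : 0 < δ) :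
    0 < lowerDens {τ : ℝ | ∀ n : ℕ, (Nat.nth Nat.Prime n : ℝ) ≤ z →
      distNearestInt (τ * Real.log (Nat.nth Nat.Prime n) / (2 * Real.pi)
        - ((n : ℝ) + 1) / (q : ℝ)) < δ} :=
  kronecker_positive_density_general (fun n => ((n : ℝ) + 1) / q) z hδ
end
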